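/- arXiv:2603.21821 — 3 statements merged into one kernel-verified Lean document; each statement's English description precedes it below -/
import Mathlib

section
/- The first rational quadratic Bézier segment lies on the unit circle: for every u ∈ [0,1], the denominator d₁(u) is strictly positive, the point P₁(u) = n₁(u)/d₁(u) has both coordinates nonnegative, and ‖P₁(u)‖² = 1, i.e., P₁(u) lies on the unit circle. -/
/-!
Both inner products `⟪(1,0), (1,√2-1)⟫` and `⟪(√2/2,√2/2), (1,√2-1)⟫` of an end control point with
the middle one equal `1`, since the middle control point is the intersection of the tangents at the
ends. Hence in `d₁² - ‖n₁‖²` only the multiples of `u² (1-u)²` survive, and these cancel exactly when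
`4 w (√2-1)² = 2 - √2`, which holds for `w = (2+√2)/4`. The sign claims hold because every Bernstein
term is nonnegative on `[0,1]`.
-/

noncomputable section

/-- The middle weight `w = (2 + √2)/4` of the quadratic NURBS quarter circle. -/
def wgt : ℝ := (2 + Real.sqrt 2) / 4

/-- Denominator of the first rational quadratic Bézier segment. -/
def d₁ (u : ℝ) : ℝ := (1 - u) ^ 2 + 2 * u * (1 - u) * wgt + u ^ 2 * wgt

/-- Numerator of the first rational quadratic Bézier segment. -/
def n₁ (u : ℝ) : ℝ × ℝ :=
  (1 - u) ^ 2 • ((1 : ℝ), (0 : ℝ)) +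
    (2 * u * (1 - u) * wgt) • ((1 : ℝ), Real.sqrt 2 - 1) +
    (u ^ 2 * wgt) • (Real.sqrt 2 / 2, Real.sqrt 2 / 2)

/-- The first rational quadratic Bézier segment. -/
def P₁ (u : ℝ) : ℝ × ℝ := (d₁ u)⁻¹ • n₁ u

/-- Denominator of the second rational quadratic Bézier segment. -/
def d₂ (u : ℝ) : ℝ := (1 - u) ^ 2 * wgt + 2 * u * (1 - u) * wgt + u ^ 2

/-- Numerator of the second rational quadratic Bézier segment. -/
def n₂ (u : ℝ) : ℝ × ℝ :=
  ((1 - u) ^ 2 * wgt) • (Real.sqrt 2 / 2, Real.sqrt 2 / 2) +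
    (2 * u * (1 - u) * wgt) • (Real.sqrt 2 - 1, (1 : ℝ)) +
    u ^ 2 • ((0 : ℝ), (1 : ℝ))

/-- The second rational quadratic Bézier segment. -/
def P₂ (u : ℝ) : ℝ × ℝ := (d₂ u)⁻¹ • n₂ u

/-- The quadratic NURBS quarter-circle curve of Example 2, on the knot set
`{0,0,0,1/2,1,1,1}`. -/
def C (t : ℝ) : ℝ × ℝ := if t ≤ 1 / 2 then P₁ (2 * t) else P₂ (2 * t - 1)

end

/-- The first rational quadratic Bézier segment lies on the unit circle: for every
`u ∈ [0,1]`, the denominator `d₁ u` is strictly positive, the point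
`P₁ u = n₁ u / d₁ u` has both coordinates nonnegative, and it lies on the unit
circle. -/
theorem stmt_11 : ∀ u ∈ Set.Icc (0 : ℝ) 1,
    0 < d₁ u ∧ 0 ≤ (P₁ u).1 ∧ 0 ≤ (P₁ u).2 ∧ (P₁ u).1 ^ 2 + (P₁ u).2 ^ 2 = 1 := by
  intro u ⟨hu0, hu1⟩
  have hs2 : Real.sqrt 2 ^ 2 = 2 := Real.sq_sqrt (by norm_num)
  have hs1 : 1 ≤ Real.sqrt 2 := Real.one_le_sqrt.mpr (by norm_num)
  have hv : 0 ≤ 1 - u := by linarith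
  have hw : 0 < wgt := by unfold wgt; positivity
  have hd : 0 < d₁ u := by
    unfold d₁
    -- The outer Bernstein terms cannot vanish simultaneously.
    rcases hu0.eq_or_lt with rfl | h
    · norm_num
    · positivity
  have hx : (n₁ u).1 = (1 - u) ^ 2 + 2 * u * (1 - u) * wgt
      + u ^ 2 * wgt * (Real.sqrt 2 / 2) := by simp [n₁]
  have hy : (n₁ u).2 = 2 * u * (1 - u) * wgt * (Real.sqrt 2 - 1)
      + u ^ 2 * wgt * (Real.sqrt 2 / 2) := by simp [n₁]
  have hs : 0 ≤ Real.sqrt 2 - 1 := by linarith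
  have hP1 : (P₁ u).1 = (d₁ u)⁻¹ * (n₁ u).1 := rfl
  have hP2 : (P₁ u).2 = (d₁ u)⁻¹ * (n₁ u).2 := rfl
  -- The weight is chosen so that the two `u² (1 - u)²` contributions cancel.
  have hkey : 4 * wgt * (Real.sqrt 2 - 1) ^ 2 = 2 - Real.sqrt 2 := by
    unfold wgt
    linear_combination Real.sqrt 2 * hs2
  have hn : (n₁ u).1 ^ 2 + (n₁ u).2 ^ 2 = d₁ u ^ 2 := by
    rw [hx, hy, d₁]
    linear_combination u ^ 2 * (1 - u) ^ 2 * wgt * hkey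
      + (u ^ 4 * wgt ^ 2 / 2 + 2 * u ^ 3 * (1 - u) * wgt ^ 2) * hs2
  refine ⟨hd, ?_, ?_, ?_⟩
  · rw [hP1, hx]
    positivity
  · rw [hP2, hy]
    positivity
  · rw [hP1, hP2, mul_pow, mul_pow, ← mul_add, hn, ← mul_pow,
      inv_mul_cancel₀ hd.ne', one_pow]
end

section
/- The second rational quadratic Bézier segment lies on the unit circle: for every u ∈ [0,1], the denominator d₂(u) is strictly positive, the point P₂(u) = n₂(u)/d₂(u) has both coordinates nonnegative, and ‖P₂(u)‖² = 1, i.e., P₂(u) lies on the unit circle. -/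
/-- The second rational quadratic Bézier segment lies on the unit circle: for every
`u ∈ [0,1]`, the denominator `d₂ u` is strictly positive, the point
`P₂ u = n₂ u / d₂ u` has both coordinates nonnegative, and it lies on the unit
circle. -/
theorem stmt_12 : ∀ u ∈ Set.Icc (0 : ℝ) 1,
    0 < d₂ u ∧ 0 ≤ (P₂ u).1 ∧ 0 ≤ (P₂ u).2 ∧ (P₂ u).1 ^ 2 + (P₂ u).2 ^ 2 = 1 := by
  rintro u ⟨h0, h1⟩
  have hs : Real.sqrt 2 ^ 2 = 2 := Real.sq_sqrt (by norm_num)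
  have hs1 : 1 ≤ Real.sqrt 2 := Real.one_le_sqrt.mpr (by norm_num)
  have hw : 0 < wgt := by unfold wgt; positivity
  have hv : 0 ≤ 1 - u := by linarith
  have ht : 0 ≤ Real.sqrt 2 - 1 := by linarith
  have hd : 0 < d₂ u := by
    have hm : 0 ≤ 2 * u * (1 - u) * wgt := by positivity
    unfold d₂
    -- The two end terms cannot vanish simultaneously.
    rcases h0.eq_or_lt with rfl | hu
    · simpa using hw
    · positivity
  have e1 : (n₂ u).1 = (1 - u) ^ 2 * wgt * (Real.sqrt 2 / 2)
      + 2 * u * (1 - u) * wgt * (Real.sqrt 2 - 1) := by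
    simp [n₂]
  have e2 : (n₂ u).2 = (1 - u) ^ 2 * wgt * (Real.sqrt 2 / 2)
      + 2 * u * (1 - u) * wgt + u ^ 2 := by
    simp [n₂]
  have p1 : (P₂ u).1 = (n₂ u).1 / d₂ u := by simp [P₂, div_eq_inv_mul]
  have p2 : (P₂ u).2 = (n₂ u).2 / d₂ u := by simp [P₂, div_eq_inv_mul]
  have key : (n₂ u).1 ^ 2 + (n₂ u).2 ^ 2 = d₂ u ^ 2 := by
    rw [e1, e2]
    unfold d₂ wgt
    generalize Real.sqrt 2 = s at hs
    grind
  refine ⟨hd, ?_, ?_, ?_⟩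
  · rw [p1, e1]; positivity
  · rw [p2, e2]; positivity
  · rw [p1, p2, div_pow, div_pow, ← add_div, key]
    exact div_self (pow_ne_zero 2 hd.ne')
end

section
/- The NURBS curve C is an exact parametrization of the quarter unit circle: C is a bijection from the interval [0,1] onto the circular arc {(x,y) ∈ ℝ² : x² + y² = 1, x ≥ 0, y ≥ 0}. -/
lemma sqrt_two_mul_self' : Real.sqrt 2 * Real.sqrt 2 = 2 :=
  Real.mul_self_sqrt (by norm_num)

/-- Half-angle numerator `A`: proportional to the cosine of half the polar angle of `P₁ u`. -/
noncomputable def halfCos (u : ℝ) : ℝ := 1 - u * ((2 - Real.sqrt 2) / 4)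

/-- Half-angle numerator `B`: proportional to the sine of half the polar angle of `P₁ u`. -/
noncomputable def halfSin (u : ℝ) : ℝ := Real.sqrt 2 / 4 * u

lemma d₁_eq (u : ℝ) : d₁ u = halfCos u ^ 2 + halfSin u ^ 2 := by
  have h := sqrt_two_mul_self'
  simp only [d₁, halfCos, halfSin, wgt]
  linear_combination (-u ^ 2 / 8) * h

lemma n₁_fst (u : ℝ) : (n₁ u).1 = halfCos u ^ 2 - halfSin u ^ 2 := by
  have h := sqrt_two_mul_self'
  simp only [n₁, halfCos, halfSin, wgt, Prod.fst_add, Prod.smul_fst, smul_eq_mul]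
  linear_combination (u ^ 2 / 8) * h

lemma n₁_snd (u : ℝ) : (n₁ u).2 = 2 * halfCos u * halfSin u := by
  have h := sqrt_two_mul_self'
  simp only [n₁, halfCos, halfSin, wgt, Prod.snd_add, Prod.smul_snd, smul_eq_mul]
  linear_combination (u / 2 - u ^ 2 / 2) * h

lemma P₁_fst (u : ℝ) :
    (P₁ u).1 = (halfCos u ^ 2 - halfSin u ^ 2) / (halfCos u ^ 2 + halfSin u ^ 2) := by
  simp only [P₁, Prod.smul_fst, smul_eq_mul, n₁_fst, d₁_eq]
  ring

lemma P₁_snd (u : ℝ) :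
    (P₁ u).2 = 2 * halfCos u * halfSin u / (halfCos u ^ 2 + halfSin u ^ 2) := by
  simp only [P₁, Prod.smul_snd, smul_eq_mul, n₁_snd, d₁_eq]
  ring

lemma P₂_eq_swap (u : ℝ) : P₂ u = (P₁ (1 - u)).swap := by
  have hd : d₂ u = d₁ (1 - u) := by simp only [d₁, d₂]; ring
  ext
  · simp only [P₂, P₁, hd, n₁, n₂, Prod.fst_swap, Prod.smul_fst, Prod.smul_snd, Prod.fst_add,
      Prod.snd_add, smul_eq_mul]
    ring
  · simp only [P₂, P₁, hd, n₁, n₂, Prod.snd_swap, Prod.smul_fst, Prod.smul_snd, Prod.fst_add,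
      Prod.snd_add, smul_eq_mul]
    ring

/-- The eighth of the unit circle between the positive `x`-axis and the diagonal. -/
def eighthArc : Set (ℝ × ℝ) := {p | p.1 ^ 2 + p.2 ^ 2 = 1 ∧ 0 ≤ p.2 ∧ p.2 ≤ p.1}

/-- The inverse of `P₁` on the arc, obtained by solving `halfSin u / halfCos u = y / (1 + x)`
for `u`. -/
noncomputable def nurbsInv (p : ℝ × ℝ) : ℝ :=
  2 * Real.sqrt 2 * p.2 / (1 + p.1 + (Real.sqrt 2 - 1) * p.2)

lemma one_lt_sqrt_two' : 1 < Real.sqrt 2 := Real.lt_sqrt_of_sq_lt (by norm_num)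

lemma halfCos_pos {u : ℝ} (hu : u ≤ 1) : 0 < halfCos u := by
  have h := sqrt_two_mul_self'
  have h1 := one_lt_sqrt_two'
  have h2 : Real.sqrt 2 < 2 := by nlinarith
  simp only [halfCos]
  nlinarith

lemma mapsTo_P₁ : Set.MapsTo P₁ (Set.Icc 0 1) eighthArc := by
  rintro u ⟨hu0, hu1⟩
  have h := sqrt_two_mul_self'
  have h1 := one_lt_sqrt_two'
  have hA := halfCos_pos hu1
  have hB : 0 ≤ halfSin u := by simp only [halfSin]; positivity
  have hD : 0 < halfCos u ^ 2 + halfSin u ^ 2 := by positivity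
  -- `√2 - 1 = tan (π/8)`: the half angle does not exceed `π/8`.
  have hAB : 0 ≤ (Real.sqrt 2 - 1) * halfCos u - halfSin u := by
    have : (Real.sqrt 2 - 1) * halfCos u - halfSin u = (Real.sqrt 2 - 1) * (1 - u) := by
      simp only [halfCos, halfSin]
      linear_combination (u / 4) * h
    rw [this]
    exact mul_nonneg (by linarith) (by linarith)
  refine ⟨?_, ?_, ?_⟩
  · rw [P₁_fst, P₁_snd]
    field_simp
    ring
  · rw [P₁_snd]
    positivity
  · rw [P₁_fst, P₁_snd]
    refine div_le_div_of_nonneg_right ?_ hD.le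
    have h2 : 0 ≤ (Real.sqrt 2 + 1) * halfCos u + halfSin u := by positivity
    have h3 := mul_nonneg hAB h2
    linear_combination h3 + halfCos u ^ 2 * h

lemma leftInvOn_P₁ : Set.LeftInvOn nurbsInv P₁ (Set.Icc 0 1) := by
  rintro u ⟨hu0, hu1⟩
  have h := sqrt_two_mul_self'
  have hA := halfCos_pos hu1
  have hD : 0 < halfCos u ^ 2 + halfSin u ^ 2 := by positivity
  -- The denominator of `nurbsInv` collapses because `A + (√2 - 1) B = 1`.
  have hden : 1 + (P₁ u).1 + (Real.sqrt 2 - 1) * (P₁ u).2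
      = 2 * halfCos u / (halfCos u ^ 2 + halfSin u ^ 2) := by
    have hone : halfCos u + (Real.sqrt 2 - 1) * halfSin u = 1 := by
      simp only [halfCos, halfSin]
      linear_combination (u / 4) * h
    rw [P₁_fst, P₁_snd]
    field_simp
    linear_combination 2 * halfCos u * hone
  have hB : 2 * Real.sqrt 2 * halfSin u = u := by
    simp only [halfSin]
    linear_combination (u / 2) * h
  rw [nurbsInv, hden, P₁_snd]
  field_simp
  linear_combination hB

lemma mapsTo_nurbsInv : Set.MapsTo nurbsInv eighthArc (Set.Icc 0 1) := by
  rintro ⟨x, y⟩ ⟨hxy, hy, hyx⟩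
  simp only at hxy hy hyx
  have h := sqrt_two_mul_self'
  have h1 := one_lt_sqrt_two'
  have hD : 0 < 1 + x + (Real.sqrt 2 - 1) * y := by nlinarith
  have hy1 : Real.sqrt 2 * y ≤ 1 := by
    refine abs_le_of_sq_le_sq' ?_ zero_le_one |>.2
    nlinarith
  refine ⟨div_nonneg (by positivity) hD.le, (div_le_one hD).2 ?_⟩
  simp only
  linarith

lemma rightInvOn_P₁ : Set.RightInvOn nurbsInv P₁ eighthArc := by
  rintro ⟨x, y⟩ ⟨hxy, hy, hyx⟩
  simp only at hxy hy hyx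
  have h := sqrt_two_mul_self'
  have h1 := one_lt_sqrt_two'
  have hD : 0 < 1 + x + (Real.sqrt 2 - 1) * y := by nlinarith
  have hx : 0 < 1 + x := by linarith
  obtain ⟨D, hDeq⟩ : ∃ D, D = 1 + x + (Real.sqrt 2 - 1) * y := ⟨_, rfl⟩
  rw [← hDeq] at hD
  have hA : halfCos (nurbsInv (x, y)) = (1 + x) / D := by
    simp only [halfCos, nurbsInv, ← hDeq]
    field_simp
    linear_combination 4 * hDeq + (2 * y) * h
  have hB : halfSin (nurbsInv (x, y)) = y / D := by
    simp only [halfSin, nurbsInv, ← hDeq]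
    field_simp
    linear_combination (2 * y) * h
  have hN : 0 < (1 + x) ^ 2 + y ^ 2 := by positivity
  ext
  · rw [P₁_fst, hA, hB]
    field_simp
    linear_combination (-1 - x) * hxy
  · rw [P₁_snd, hA, hB]
    field_simp
    linear_combination -y * hxy

lemma bijOn_P₁ : Set.BijOn P₁ (Set.Icc 0 1) eighthArc :=
  Set.InvOn.bijOn ⟨leftInvOn_P₁, rightInvOn_P₁⟩ mapsTo_P₁ mapsTo_nurbsInv

lemma P₁_one_fst_eq_snd : (P₁ 1).1 = (P₁ 1).2 := by
  simp [P₁, n₁]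

/-- The parameter `u = 1` is the only one at which the first segment meets the diagonal. -/
lemma eq_one_of_P₁_diag {u : ℝ} (hu : u ∈ Set.Icc (0 : ℝ) 1) (h : (P₁ u).1 = (P₁ u).2) :
    u = 1 := by
  have h1 : (1 : ℝ) ∈ Set.Icc (0 : ℝ) 1 := by simp
  obtain ⟨a1, a2, a3⟩ := bijOn_P₁.mapsTo hu
  obtain ⟨b1, b2, b3⟩ := bijOn_P₁.mapsTo h1
  have hd := P₁_one_fst_eq_snd
  have e : (P₁ u).2 = (P₁ 1).2 := by
    rw [h] at a1
    rw [hd] at b1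
    exact (sq_eq_sq₀ a2 b2).1 (by linarith)
  exact bijOn_P₁.injOn hu h1 (Prod.ext (by rw [h, hd, e]) e)

lemma C_of_le {t : ℝ} (ht : t ≤ 1 / 2) : C t = P₁ (2 * t) := by
  rw [C, if_pos ht]

lemma C_of_gt {t : ℝ} (ht : 1 / 2 < t) : C t = (P₁ (2 - 2 * t)).swap := by
  rw [C, if_neg ht.not_ge, P₂_eq_swap]
  congr 2
  ring

/-- The two halves of the curve are disjoint: a common point would lie on the diagonal, which the
second half reaches only in the limit `t → 1/2`. -/
lemma C_ne_of_le_of_gt {s t : ℝ} (hs0 : 0 ≤ s) (hs : s ≤ 1 / 2) (ht : 1 / 2 < t) (ht1 : t ≤ 1) :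
    C s ≠ C t := by
  intro hst
  rw [C_of_le hs, C_of_gt ht] at hst
  have hu : 2 - 2 * t ∈ Set.Icc (0 : ℝ) 1 := ⟨by linarith, by linarith⟩
  obtain ⟨-, -, a⟩ := bijOn_P₁.mapsTo (show 2 * s ∈ Set.Icc (0 : ℝ) 1 from
    ⟨by linarith, by linarith⟩)
  obtain ⟨-, -, b⟩ := bijOn_P₁.mapsTo hu
  rw [hst, Prod.fst_swap, Prod.snd_swap] at a
  have := eq_one_of_P₁_diag hu (le_antisymm a b)
  linarith

/-- The NURBS curve `C` is an exact parametrization of the quarter unit circle: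
`C` is a bijection from `[0,1]` onto
`{(x,y) : x² + y² = 1, x ≥ 0, y ≥ 0}`. -/
theorem stmt_14 :
    Set.BijOn C (Set.Icc 0 1)
      {p : ℝ × ℝ | p.1 ^ 2 + p.2 ^ 2 = 1 ∧ 0 ≤ p.1 ∧ 0 ≤ p.2} := by
  refine ⟨?_, ?_, ?_⟩
  · rintro t ⟨ht0, ht1⟩
    rcases le_or_gt t (1 / 2) with ht | ht
    · rw [C_of_le ht]
      obtain ⟨a, b, c⟩ := bijOn_P₁.mapsTo (show 2 * t ∈ Set.Icc (0 : ℝ) 1 from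
        ⟨by linarith, by linarith⟩)
      exact ⟨a, b.trans c, b⟩
    · rw [C_of_gt ht]
      obtain ⟨a, b, c⟩ := bijOn_P₁.mapsTo (show 2 - 2 * t ∈ Set.Icc (0 : ℝ) 1 from
        ⟨by linarith, by linarith⟩)
      exact ⟨by rw [Prod.fst_swap, Prod.snd_swap, add_comm]; exact a, b, b.trans c⟩
  · rintro s ⟨hs0, hs1⟩ t ⟨ht0, ht1⟩ hst
    rcases le_or_gt s (1 / 2) with hs | hs <;> rcases le_or_gt t (1 / 2) with ht | ht
    · rw [C_of_le hs, C_of_le ht] at hst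
      have := bijOn_P₁.injOn ⟨by linarith, by linarith⟩ ⟨by linarith, by linarith⟩ hst
      linarith
    · exact absurd hst (C_ne_of_le_of_gt hs0 hs ht ht1)
    · exact absurd hst.symm (C_ne_of_le_of_gt ht0 ht hs hs1)
    · rw [C_of_gt hs, C_of_gt ht] at hst
      have := bijOn_P₁.injOn ⟨by linarith, by linarith⟩ ⟨by linarith, by linarith⟩
        (Prod.swap_injective hst)
      linarith
  · rintro ⟨x, y⟩ ⟨hxy, hx, hy⟩
    simp only at hxy hx hy
    rcases le_or_gt y x with hle | hlt
    · obtain ⟨u, ⟨hu0, hu1⟩, hu⟩ := bijOn_P₁.surjOn (show (x, y) ∈ eighthArc from ⟨hxy, hy, hle⟩)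
      refine ⟨u / 2, ⟨by linarith, by linarith⟩, ?_⟩
      rw [C_of_le (by linarith), mul_div_cancel₀ u two_ne_zero, hu]
    · obtain ⟨u, ⟨hu0, hu1⟩, hu⟩ := bijOn_P₁.surjOn
        (show (y, x) ∈ eighthArc from ⟨by simpa only [add_comm] using hxy, hx, hlt.le⟩)
      -- Off the diagonal, `u = 1` is excluded, so `1 - u/2` lies in the second half.
      have hne : u ≠ 1 := by
        rintro rfl
        have := P₁_one_fst_eq_snd
        rw [hu] at this
        exact hlt.ne' this
      have hu1' := lt_of_le_of_ne hu1 hne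
      refine ⟨1 - u / 2, ⟨by linarith, by linarith⟩, ?_⟩
      rw [C_of_gt (by linarith), show 2 - 2 * (1 - u / 2) = u by ring, hu, Prod.swap_prod_mk]
end
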